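/- For every a = (a₃,a₂,a₁,a₀) ∈ ℕ⁴ the dual canonical basis elements satisfy B[a₃, a₂+1, a₁, a₀+1] = q^{a₂+2a₁+3a₀} B[a] p₀ = q^{4a₃+3a₂+2a₁+a₀} p₀ B[a] and B[a₃+1, a₂, a₁+1, a₀] = q^{3a₃+2a₂+a₁} p₁ B[a] = q^{a₃+2a₂+3a₁+4a₀} B[a] p₁. -/

import Mathlib

noncomputable section

abbrev F : Type := RatFunc ℚ

/-- The deformation parameter `q`. -/
def qq : F := RatFunc.X

/-- The quantum integer `[3] = q² + 1 + q⁻²`. -/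
def box3 : F := qq ^ 2 + 1 + (qq⁻¹) ^ 2

/-- The generators `E₁, E₂` of the free algebra. -/
def gen (i : Fin 2) : FreeAlgebra F (Fin 2) := FreeAlgebra.ι F i

/-- The quantized Serre relations. -/
inductive SerreRel : FreeAlgebra F (Fin 2) → FreeAlgebra F (Fin 2) → Prop
  | rel1 : SerreRel
      (gen 0 ^ 3 * gen 1 - box3 • (gen 0 ^ 2 * gen 1 * gen 0)
        + box3 • (gen 0 * gen 1 * gen 0 ^ 2) - gen 1 * gen 0 ^ 3) 0
  | rel2 : SerreRel
      (gen 1 ^ 3 * gen 0 - box3 • (gen 1 ^ 2 * gen 0 * gen 1)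
        + box3 • (gen 1 * gen 0 * gen 1 ^ 2) - gen 0 * gen 1 ^ 3) 0

/-- `U = U_q(𝔫)`, the free algebra on `E₁, E₂` modulo the quantized Serre relations. -/
abbrev U : Type := RingQuot SerreRel

def E1 : U := RingQuot.mkAlgHom F SerreRel (gen 0)
def E2 : U := RingQuot.mkAlgHom F SerreRel (gen 1)

/-- `A = (1/(q+q⁻¹))(E₂E₁ − q⁻²E₁E₂)`. -/
def Aelt : U := (qq + qq⁻¹)⁻¹ • (E2 * E1 - (qq⁻¹) ^ 2 • (E1 * E2))

def v0 : U := E1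
def v1 : U := Aelt * v0 - v0 * Aelt
def v2 : U := Aelt * v1 - v1 * Aelt
def v3 : U := Aelt * v2 - v2 * Aelt

/-- `uᵢ = (1 − q⁻²)⁻²ⁱ vᵢ`. -/
def u0 : U := v0
def u1 : U := ((1 - (qq⁻¹) ^ 2)⁻¹) ^ 2 • v1
def u2 : U := ((1 - (qq⁻¹) ^ 2)⁻¹) ^ 4 • v2
def u3 : U := ((1 - (qq⁻¹) ^ 2)⁻¹) ^ 6 • v3

/-- `p₁ = u₃u₁ − q²u₂²`. -/
def p1 : U := u3 * u1 - qq ^ 2 • u2 ^ 2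
/-- `p₀ = u₂u₀ − q²u₁²`. -/
def p0 : U := u2 * u0 - qq ^ 2 • u1 ^ 2

/-- `S`, the subalgebra of `U` generated by `u₀, u₁, u₂, u₃`. -/
abbrev Sgen : Subalgebra F U := Algebra.adjoin F ({u0, u1, u2, u3} : Set U)

def us0 : Sgen := ⟨u0, Algebra.subset_adjoin (by simp)⟩
def us1 : Sgen := ⟨u1, Algebra.subset_adjoin (by simp)⟩
def us2 : Sgen := ⟨u2, Algebra.subset_adjoin (by simp)⟩
def us3 : Sgen := ⟨u3, Algebra.subset_adjoin (by simp)⟩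

/-- `p₁ = u₃u₁ − q²u₂²` as an element of `S`. -/
def ps1 : Sgen := us3 * us1 - qq ^ 2 • us2 ^ 2
/-- `p₀ = u₂u₀ − q²u₁²` as an element of `S`. -/
def ps0 : Sgen := us2 * us0 - qq ^ 2 • us1 ^ 2

/-- Index quadruples `a = (a₃, a₂, a₁, a₀)`. -/
abbrev Idx : Type := ℕ × ℕ × ℕ × ℕ

/-- The PBW monomial `u₃^{a₃}u₂^{a₂}u₁^{a₁}u₀^{a₀}`. -/
def mon (a : Idx) : Sgen := us3 ^ a.1 * us2 ^ a.2.1 * us1 ^ a.2.2.1 * us0 ^ a.2.2.2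

/-- `b(a) = C(a₃,2)+C(a₂,2)+C(a₁,2)+C(a₀,2)`. -/
def bexp (a : Idx) : ℕ :=
  Nat.choose a.1 2 + Nat.choose a.2.1 2 + Nat.choose a.2.2.1 2 + Nat.choose a.2.2.2 2

/-- The dual PBW basis element `E[a] = q^{b(a)} u₃^{a₃}u₂^{a₂}u₁^{a₁}u₀^{a₀}`. -/
def Ee (a : Idx) : Sgen := qq ^ bexp a • mon a

/-- `N(a) = (a₃+a₂+a₁+a₀)² − 7a₃ − 5a₂ − 3a₁ − a₀`. -/
def Nnum (a : Idx) : ℤ :=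
  ((a.1 : ℤ) + a.2.1 + a.2.2.1 + a.2.2.2) ^ 2
    - 7 * a.1 - 5 * a.2.1 - 3 * a.2.2.1 - a.2.2.2

/-- `a ⊴ b` iff `b − a ∈ ℕ·(−1,2,−1,0) + ℕ·(0,−1,2,−1)`. -/
def tri (a b : Idx) : Prop :=
  ∃ s r : ℕ,
    (b.1 : ℤ) = a.1 - s ∧
    (b.2.1 : ℤ) = a.2.1 + 2 * s - r ∧
    (b.2.2.1 : ℤ) = a.2.2.1 - s + 2 * r ∧
    (b.2.2.2 : ℤ) = a.2.2.2 - r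

/-- `S(a) = {b ∈ ℕ⁴ : a ⊴ b and a ≠ b}`. -/
def Sset (a : Idx) : Set Idx := {b | tri a b ∧ a ≠ b}

/-- Condition (i): `B[a] − E[a] ∈ Σ_{b ∈ S(a)} qℤ[q]·E[b]`. -/
def cond1 (B : Idx → Sgen) (a : Idx) : Prop :=
  ∃ φ : Idx →₀ Polynomial ℤ,
    (↑φ.support : Set Idx) ⊆ Sset a ∧
    B a - Ee a =
      φ.sum fun b p => (qq * Polynomial.eval₂ (Int.castRingHom F) qq p) • Ee b

/-- Hypotheses on the bar involution of coefficients `bar : q ↦ q⁻¹` and on the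
anti-automorphism `σ` of `S`: `σ` is an additive, anti-multiplicative bijection with
`σ(c(q)·x) = c(q⁻¹)·σ(x)` and `σ(uᵢ) = q^{2i}uᵢ`. -/
def SigmaHyp (bar : F →+* F) (σ : Sgen → Sgen) : Prop :=
  bar qq = qq⁻¹ ∧
  Function.Bijective σ ∧
  (∀ x y : Sgen, σ (x + y) = σ x + σ y) ∧
  (∀ x y : Sgen, σ (x * y) = σ y * σ x) ∧
  (∀ (c : F) (x : Sgen), σ (c • x) = bar c • σ x) ∧
  σ us0 = us0 ∧ σ us1 = qq ^ 2 • us1 ∧ σ us2 = qq ^ 4 • us2 ∧ σ us3 = qq ^ 6 • us3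

/-- The defining properties of the dual canonical basis `B`: for every `a ∈ ℕ⁴`,
`B[a] − E[a] ∈ Σ_{b ∈ S(a)} qℤ[q]·E[b]` and `σ(B[a]) = q^{−N(a)}B[a]`. -/
def DCB (bar : F →+* F) (σ : Sgen → Sgen) (B : Idx → Sgen) : Prop :=
  ∀ a : Idx, cond1 B a ∧ σ (B a) = qq ^ (-Nnum a) • B a

/-- Extension of `B` to integer quadruples by the convention that `B[a] = 0` whenever
some coordinate of `a` is negative. -/
def Bz (B : Idx → Sgen) (a : ℤ × ℤ × ℤ × ℤ) : Sgen :=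
  if 0 ≤ a.1 ∧ 0 ≤ a.2.1 ∧ 0 ≤ a.2.2.1 ∧ 0 ≤ a.2.2.2 then
    B (a.1.toNat, a.2.1.toNat, a.2.2.1.toNat, a.2.2.2.toNat)
  else 0


theorem heis1 {K R : Type*} [Field K] [Ring R] [Algebra K R] (t : K) (ht : t ≠ 0)
    (x y : R)
    (S1 : x^3*y - (t+1+t⁻¹) • (x^2*y*x) + (t+1+t⁻¹) • (x*y*x^2) - y*x^3 = 0)
    (A v W : R) (hA : A = y*x - t⁻¹ • (x*y)) (hv : v = A*x - x*A)
    (hW : W = (2*t) • (y*v) - (2:K) • (v*y) + (1-t^2) • (A*A)) :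
    W*x - x*W = (1+t^2) • (A*v - v*A) := by
  have h1 : (2*t⁻¹) • ((x^3*y - (t+1+t⁻¹) • (x^2*y*x) + (t+1+t⁻¹) • (x*y*x^2) - y*x^3) * y) -
    (2*t) • (y * (x^3*y - (t+1+t⁻¹) • (x^2*y*x) + (t+1+t⁻¹) • (x*y*x^2) - y*x^3)) = 0 := by
    rw [S1]; simp
  rw [← sub_eq_zero, ← h1, hW, hv, hA]
  simp only [pow_succ, pow_zero, one_mul, mul_add, add_mul, mul_sub, sub_mul, smul_mul_assoc, mul_smul_comm, mul_assoc]
  match_scalars <;> field_simp <;> ring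

theorem heis2 {K R : Type*} [Field K] [Ring R] [Algebra K R] (t : K) (ht : t ≠ 0)
    (h3 : 1 + t + t^2 ≠ 0) (x y : R)
    (S1 : x^3*y - (t+1+t⁻¹) • (x^2*y*x) + (t+1+t⁻¹) • (x*y*x^2) - y*x^3 = 0)
    (S2 : y^3*x - (t+1+t⁻¹) • (y^2*x*y) + (t+1+t⁻¹) • (y*x*y^2) - x*y^3 = 0)
    (A v W : R) (hA : A = y*x - t⁻¹ • (x*y)) (hv : v = A*x - x*A)
    (hW : W = (2*t) • (y*v) - (2:K) • (v*y) + (1-t^2) • (A*A)) :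
    A*W = W*A := by
  have h1 : ∀ a b : R, a = 0 → b = 0 → (2/(t*(1+t+t^2))) • (a*y*y) - (2*(1+t)/(1+t+t^2)) • (y*a*y) + (2*t^2/(1+t+t^2)) • (y*y*a)
     + (2/(t*(1+t+t^2))) • (x*x*b) - (2*(1+t)/(1+t+t^2)) • (x*b*x) + (2*t^2/(1+t+t^2)) • (b*x*x) = 0 := by
    rintro a b rfl rfl; simp
  rw [← sub_eq_zero, ← h1 _ _ S1 S2, hW, hv, hA]
  simp only [pow_succ, pow_zero, one_mul, mul_add, add_mul, mul_sub, sub_mul, smul_mul_assoc, mul_smul_comm, mul_assoc, smul_add, smul_sub, smul_smul]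
  match_scalars <;> field_simp <;> ring

theorem qserre {K R : Type*} [Field K] [Ring R] [Algebra K R] (t : K) (ht : t ≠ 0)
    (x y : R)
    (S1 : x^3*y - (t+1+t⁻¹) • (x^2*y*x) + (t+1+t⁻¹) • (x*y*x^2) - y*x^3 = 0)
    (A v : R) (hA : A = y*x - t⁻¹ • (x*y)) (hv : v = A*x - x*A) :
    v*x = t • (x*v) := by
  have h1 : ∀ a : R, a = 0 → - a = 0 := by simp
  rw [← sub_eq_zero, ← h1 _ S1, hv, hA]
  simp only [pow_succ, pow_zero, one_mul, mul_add, add_mul, mul_sub, sub_mul, smul_mul_assoc, mul_smul_comm, mul_assoc]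
  match_scalars <;> field_simp <;> ring

theorem heisstep {K R : Type*} [Field K] [CharZero K] [Ring R] [Algebra K R] (t k : K) (hk : k ≠ 0)
    (A W x0 x1 x2 x3 : R) (h1 : A*x0 = x1 + x0*A) (h2 : A*x1 = x2 + x1*A) (h3 : A*x2 = x3 + x2*A)
    (w0 : W*x0 = k • x2 + x0*W) (w1 : W*x1 = k • x3 + x1*W) (r : x1*x0 = t • (x0*x1)) :
    x2*x0 = t • (x0*x2) + (t-1) • (x1*x1) ∧ x2*x1 = t • (x1*x2) ∧
    x3*x0 = t • (x0*x3) + (t^2-1) • (x1*x2) := by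
  have a : ∀ p q r s : R, A*p = r + p*A → A*q = s+q*A → A*(p*q) - p*q*A = r*q+p*s := by
    intro p q r s h h'
    rw [← mul_assoc, h, add_mul, mul_assoc, h']; noncomm_ring
  have w : ∀ p q r s : R, W*p = k • r + p*W → W*q = k • s+q*W → W*(p*q) - p*q*W = k • (r*q+p*s) := by
    intro p q r s h h'
    rw [← mul_assoc, h, add_mul, mul_assoc, h', smul_mul_assoc, mul_add, mul_smul_comm, smul_add]; noncomm_ring
  have e1 : x2*x0 + x1*x1 = t • (x1*x1+x0*x2) := by
    rw [← a _ _ _ _ h2 h1, ← a _ _ _ _ h1 h2, r]; simp [smul_sub]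
  have e2 : x3*x0 + x1*x2 = t • (x2*x1+x0*x3) := by
    apply smul_right_injective R hk
    show k • _ = k • _
    rw [← w _ _ _ _ w1 w0, smul_comm, ← w _ _ _ _ w0 w1, r]; simp [smul_sub]
  have e3 : (x3*x0 + x2*x1) + (x2*x1+x1*x2) = t • ((x2*x1+x1*x2)+(x1*x2+x0*x3)) := by
    rw [← a _ _ _ _ h3 h1, ← a _ _ _ _ h2 h2, ← a _ _ _ _ h1 h3]
    have := congrArg (fun z => A*z - z*A) e1
    simp only [mul_add, add_mul, smul_add, smul_sub, mul_smul_comm, smul_mul_assoc] at this ⊢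
    rw [← sub_eq_zero] at this ⊢; rw [← this]; abel
  have e4 : x2*x1 = t • (x1*x2) := by
    apply smul_right_injective R (two_ne_zero (α := K))
    show (2:K) • _ = (2:K) • _
    linear_combination (norm := module) e3 - e2
  refine ⟨by linear_combination (norm := module) e1, e4, ?_⟩
  rw [e4] at e2
  linear_combination (norm := module) e2

theorem sigcalc0 {K R : Type*} [Field K] [Ring R] [Algebra K R] (q : K) (hq : q ≠ 0) (x y : R) :
    q^4 • ((q^2)⁻¹ • x - (1-(q^2)⁻¹) • y) + (-q⁻¹^2) • (q^2 • q^2 • y) = q^2 • (x + (-q^2) • y) := by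
  match_scalars <;> field_simp <;> ring

theorem sigcalc1 {K R : Type*} [Field K] [Ring R] [Algebra K R] (q : K) (hq : q ≠ 0) (x y : R) :
    q^6 • q^2 • ((q^2)⁻¹ • x - (1-(q^2)⁻¹) • y) + (-q⁻¹^2) • (q^4 • q^4 • y) = q^6 • (x + (-q^2) • y) := by
  match_scalars <;> field_simp <;> ring

structure Rels {K R : Type*} [Field K] [Ring R] [Algebra K R] (q : K) (u0 u1 u2 u3 : R) : Prop where
  hq : q ≠ 0
  r01 : u0*u1 = (q^2)⁻¹ • (u1*u0)
  r12 : u1*u2 = (q^2)⁻¹ • (u2*u1)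
  r23 : u2*u3 = (q^2)⁻¹ • (u3*u2)
  r02 : u0*u2 = (q^2)⁻¹ • (u2*u0) - (1-(q^2)⁻¹) • (u1*u1)
  r13 : u1*u3 = (q^2)⁻¹ • (u3*u1) - (1-(q^2)⁻¹) • (u2*u2)
  r03 : u0*u3 = (q^2)⁻¹ • (u3*u0) - (1-((q^2)^2)⁻¹) • (u2*u1)

theorem mkRels {K R : Type*} [Field K] [CharZero K] [Ring R] [Algebra K R] (q : K) (hq : q ≠ 0)
    (hk : 1 + (q^2)^2 ≠ 0) (h3 : 1 + q^2 + (q^2)^2 ≠ 0) (c : K) (x y A u1 u2 u3 : R)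
    (S1 : x^3*y - (q^2+1+(q^2)⁻¹) • (x^2*y*x) + (q^2+1+(q^2)⁻¹) • (x*y*x^2) - y*x^3 = 0)
    (S2 : y^3*x - (q^2+1+(q^2)⁻¹) • (y^2*x*y) + (q^2+1+(q^2)⁻¹) • (y*x*y^2) - x*y^3 = 0)
    (hA : A = c • (y*x - (q^2)⁻¹ • (x*y)))
    (h1 : u1 = A*x - x*A) (h2 : u2 = A*u1 - u1*A) (h3' : u3 = A*u2 - u2*A) :
    Rels q x u1 u2 u3 := by
  have ht : q^2 ≠ 0 := pow_ne_zero _ hq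
  set t := q^2 with htd
  set A' := y*x - t⁻¹ • (x*y) with hA'
  set v := A'*x - x*A' with hv
  obtain ⟨W', hW'⟩ : ∃ W', W' = (2*t) • (y*v) - (2:K) • (v*y) + (1-t^2) • (A'*A') := ⟨_, rfl⟩
  have g1 := heis1 t ht x y S1 A' v W' hA' hv hW'
  have g2 := heis2 t ht h3 x y S1 S2 A' v W' hA' hv hW'
  have g3 := qserre t ht x y S1 A' v hA' hv
  have e1 : u1 = c • v := by rw [h1, hA, hv]; simp [smul_sub]
  obtain ⟨W, hW⟩ : ∃ W, W = c^2 • W' := ⟨_, rfl⟩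
  have hAW : A*W = W*A := by rw [hA, hW]; simp [g2, smul_smul, mul_comm]
  have w0 : W*x - x*W = (1+t^2) • u2 := by
    rw [h2, e1, hA, hW]
    simp only [smul_mul_assoc, mul_smul_comm]
    rw [← smul_sub, g1]
    module
  have wstep : ∀ p r : R, W*p - p*W = (1+t^2) • r →
      W*(A*p-p*A) - (A*p-p*A)*W = (1+t^2) • (A*r-r*A) := by
    intro p r h
    have : W*(A*p-p*A) - (A*p-p*A)*W = A*(W*p-p*W) - (W*p-p*W)*A := by
      have k1 : W*(A*p) = A*(W*p) := by rw [← mul_assoc, ← hAW, mul_assoc]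
      simp only [mul_sub, sub_mul, mul_assoc]
      rw [k1, hAW]; abel
    rw [this, h]; simp [smul_sub]
  have w1 := wstep _ _ w0
  rw [← h1, ← h3'] at w1
  have w2 := wstep _ _ w1
  rw [← h2] at w2
  have r10 : u1*x = t • (x*u1) := by rw [e1]; simp [g3, smul_smul, mul_comm]
  have i1 := sub_eq_iff_eq_add.1 h1.symm
  have i2 := sub_eq_iff_eq_add.1 h2.symm
  have i3 := sub_eq_iff_eq_add.1 h3'.symm
  have i4 : A*u3 = (A*u3-u3*A) + u3*A := by abel
  obtain ⟨s1, s2, s3⟩ := heisstep t (1+t^2) hk A W x u1 u2 u3 i1 i2 i3 (sub_eq_iff_eq_add.1 w0)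
    (sub_eq_iff_eq_add.1 w1) r10
  obtain ⟨s4, s5, s6⟩ := heisstep t (1+t^2) hk A W u1 u2 u3 (A*u3-u3*A) i2 i3 i4 (sub_eq_iff_eq_add.1 w1)
    (sub_eq_iff_eq_add.1 w2) s2
  refine ⟨hq, ?_, ?_, ?_, ?_, ?_, ?_⟩
  · rw [r10, smul_smul, inv_mul_cancel₀ ht, one_smul]
  · rw [s2, smul_smul, inv_mul_cancel₀ ht, one_smul]
  · rw [s5, smul_smul, inv_mul_cancel₀ ht, one_smul]
  · rw [s1]; match_scalars <;> field_simp <;> ring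
  · rw [s4]; match_scalars <;> field_simp <;> ring
  · rw [s3, s2]; match_scalars <;> field_simp <;> ring

section
variable {K R : Type*} [Field K] [Ring R] [Algebra K R] {q : K} {u0 u1 u2 u3 : R}

theorem Rels.comm (h : Rels q u0 u1 u2 u3) :
    (u0 * (u2*u0 - q^2 • u1^2) = (q^2)⁻¹ • ((u2*u0 - q^2 • u1^2) * u0) ∧
    u1 * (u2*u0 - q^2 • u1^2) = (u2*u0 - q^2 • u1^2) * u1 ∧
    u2 * (u2*u0 - q^2 • u1^2) = q^2 • ((u2*u0 - q^2 • u1^2) * u2) ∧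
    u3 * (u2*u0 - q^2 • u1^2) = q^4 • ((u2*u0 - q^2 • u1^2) * u3)) ∧
    (u0 * (u3*u1 - q^2 • u2^2) = (q^4)⁻¹ • ((u3*u1 - q^2 • u2^2) * u0) ∧
    u1 * (u3*u1 - q^2 • u2^2) = (q^2)⁻¹ • ((u3*u1 - q^2 • u2^2) * u1) ∧
    u2 * (u3*u1 - q^2 • u2^2) = (u3*u1 - q^2 • u2^2) * u2 ∧
    u3 * (u3*u1 - q^2 • u2^2) = q^2 • ((u3*u1 - q^2 • u2^2) * u3)) := by
  have hq := h.hq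
  have c01 : ∀ z, u0*(u1*z) = (q^2)⁻¹ • (u1*(u0*z)) := fun z => by
    rw [← mul_assoc, h.r01]; simp only [smul_mul_assoc, sub_mul, mul_assoc]
  have c12 : ∀ z, u1*(u2*z) = (q^2)⁻¹ • (u2*(u1*z)) := fun z => by
    rw [← mul_assoc, h.r12]; simp only [smul_mul_assoc, sub_mul, mul_assoc]
  have c23 : ∀ z, u2*(u3*z) = (q^2)⁻¹ • (u3*(u2*z)) := fun z => by
    rw [← mul_assoc, h.r23]; simp only [smul_mul_assoc, sub_mul, mul_assoc]
  have c02 : ∀ z, u0*(u2*z) = (q^2)⁻¹ • (u2*(u0*z)) - (1-(q^2)⁻¹) • (u1*(u1*z)) := fun z => by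
    rw [← mul_assoc, h.r02]; simp only [smul_mul_assoc, sub_mul, mul_assoc]
  have c13 : ∀ z, u1*(u3*z) = (q^2)⁻¹ • (u3*(u1*z)) - (1-(q^2)⁻¹) • (u2*(u2*z)) := fun z => by
    rw [← mul_assoc, h.r13]; simp only [smul_mul_assoc, sub_mul, mul_assoc]
  have c03 : ∀ z, u0*(u3*z) = (q^2)⁻¹ • (u3*(u0*z)) - (1-((q^2)^2)⁻¹) • (u2*(u1*z)) := fun z => by
    rw [← mul_assoc, h.r03]; simp only [smul_mul_assoc, sub_mul, mul_assoc]
  rw [sq u1, sq u2]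
  refine ⟨⟨?_, ?_, ?_, ?_⟩, ⟨?_, ?_, ?_, ?_⟩⟩ <;>
  · simp only [mul_sub, sub_mul, smul_mul_assoc, mul_smul_comm, mul_assoc, h.r01, h.r12, h.r23,
      h.r02, h.r13, h.r03, c01, c12, c23, c02, c13, c03]
    all_goals (match_scalars <;> field_simp <;> ring)

theorem qpow {x y : R} {c : K} (h : x*y = c • (y*x)) (n : ℕ) : x^n*y = c^n • (y*x^n) := by
  induction n with
  | zero => simp
  | succ n ih =>
    rw [pow_succ, mul_assoc, h, mul_smul_comm, ← mul_assoc, ih, smul_mul_assoc, smul_smul, mul_assoc,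
      pow_succ']

theorem qpow' {x y : R} {c : K} (h : x*y = c • (y*x)) (n : ℕ) : x*y^n = c^n • (y^n*x) := by
  induction n with
  | zero => simp
  | succ n ih =>
    rw [pow_succ, ← mul_assoc, ih, smul_mul_assoc, mul_assoc, h, mul_smul_comm, smul_smul, ← mul_assoc,
      pow_succ]

theorem qmon {w0 w1 w2 w3 p : R} {c0 c1 c2 c3 : K} (h0 : w0*p = c0 • (p*w0)) (h1 : w1*p = c1 • (p*w1))
    (h2 : w2*p = c2 • (p*w2)) (h3 : w3*p = c3 • (p*w3)) (a b c d : ℕ) :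
    (w3^a*w2^b*w1^c*w0^d)*p = (c3^a*c2^b*c1^c*c0^d) • (p*(w3^a*w2^b*w1^c*w0^d)) := by
  have e0 := qpow h0 d
  have e1 := qpow h1 c
  have e2 := qpow h2 b
  have e3 := qpow h3 a
  calc _ = w3^a*(w2^b*(w1^c*(w0^d*p))) := by simp only [mul_assoc]
    _ = (c1^c*c0^d) • (w3^a*(w2^b*p*(w1^c*w0^d))) := by
      rw [e0, mul_smul_comm, ← mul_assoc (w1^c), e1]
      simp only [mul_smul_comm, smul_mul_assoc, smul_smul, mul_assoc]
      rw [mul_comm]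
    _ = (c2^b*c1^c*c0^d) • (w3^a*p*(w2^b*w1^c*w0^d)) := by
      rw [e2]
      simp only [mul_smul_comm, smul_mul_assoc, smul_smul, mul_assoc]
      congr 1; ring
    _ = _ := by
      rw [e3]
      simp only [mul_smul_comm, smul_mul_assoc, smul_smul, mul_assoc]
      congr 1; ring

theorem Rels.mon0 (h : Rels q u0 u1 u2 u3) (a b c d : ℕ) :
    q^(2*c+2*d) • ((u3^a*u2^b*u1^c*u0^d)*(u2*u0 - q^2 • u1^2)) =
      u3^a*u2^(b+1)*u1^c*u0^(d+1) - q^(2*c+2) • (u3^a*u2^b*u1^(c+2)*u0^d) := by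
  obtain ⟨⟨h0, h1, h2, h3⟩, -⟩ := h.comm
  have hq := h.hq
  have e0 := qpow h0 d
  have e1 := qpow (c := (1:K)) (by rw [h1, one_smul]) c
  have e2 : u0*u1^c = ((q^2)⁻¹)^c • (u1^c*u0) := qpow' h.r01 c
  have : (u3^a*u2^b*u1^c*u0^d)*(u2*u0 - q^2 • u1^2) =
    ((q^2)⁻¹)^d • (((q^2)⁻¹)^c • (u3^a*u2^(b+1)*u1^c*u0^(d+1)) - q^2 • (u3^a*u2^b*u1^(c+2)*u0^d)) := by
    rw [mul_assoc _ (u0^d), e0, mul_smul_comm]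
    congr 1
    rw [← mul_assoc, mul_assoc _ (u1^c), e1, one_pow, one_smul, sub_mul, mul_assoc u2, e2]
    simp only [mul_sub, sub_mul, mul_smul_comm, smul_mul_assoc, mul_assoc, pow_succ u2, pow_succ' u0,
      add_comm c 2, pow_add u1 2 c]
  rw [this]
  simp only [smul_sub, smul_smul]
  congr 2
  · rw [show q^(2*c+2*d) * (((q^2)⁻¹)^d*((q^2)⁻¹)^c) = 1 by simp only [inv_pow]; field_simp; ring, one_smul]
  · simp only [inv_pow]; field_simp; ring

theorem Rels.mon1 (h : Rels q u0 u1 u2 u3) (a b c d : ℕ) :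
    q^(2*a+2*b) • ((u3*u1 - q^2 • u2^2)*(u3^a*u2^b*u1^c*u0^d)) =
      u3^(a+1)*u2^b*u1^(c+1)*u0^d - q^(2*b+2) • (u3^a*u2^(b+2)*u1^c*u0^d) := by
  obtain ⟨-, ⟨h0, h1, h2, h3⟩⟩ := h.comm
  have hq := h.hq
  have e0 := qpow h3 a
  have e2 : u1*u2^b = ((q^2)⁻¹)^b • (u2^b*u1) := qpow' h.r12 b
  have e0' : (u3*u1 - q^2 • u2^2) * u3^a = ((q^2)⁻¹)^a • (u3^a*(u3*u1 - q^2 • u2^2)) := by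
    rw [e0, smul_smul, ← mul_pow, inv_mul_cancel₀ (pow_ne_zero _ hq), one_pow, one_smul]
  have : (u3*u1 - q^2 • u2^2)*(u3^a*u2^b*u1^c*u0^d) =
    ((q^2)⁻¹)^a • (((q^2)⁻¹)^b • (u3^(a+1)*u2^b*u1^(c+1)*u0^d) - q^2 • (u3^a*u2^(b+2)*u1^c*u0^d)) := by
    rw [mul_assoc (u3^a), mul_assoc (u3^a), ← mul_assoc _ (u3^a), e0', smul_mul_assoc]
    congr 1
    rw [mul_assoc, mul_assoc (u2^b), ← mul_assoc _ (u2^b), sub_mul, mul_assoc u3, e2]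
    simp only [mul_sub, sub_mul, mul_smul_comm, smul_mul_assoc, mul_assoc, pow_succ u3, pow_succ' u1,
      add_comm b 2, pow_add u2 2 b]
  rw [this]
  simp only [smul_sub, smul_smul]
  congr 2
  · rw [show q^(2*a+2*b) * (((q^2)⁻¹)^a*((q^2)⁻¹)^b) = 1 by simp only [inv_pow]; field_simp; ring, one_smul]
  · simp only [inv_pow]; field_simp; ring
end

/-! ### Specialization -/

def ev : Polynomial ℤ →+* F := Polynomial.eval₂RingHom (Int.castRingHom F) qq

theorem ev_apply (p : Polynomial ℤ) : ev p = Polynomial.eval₂ (Int.castRingHom F) qq p := rfl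

theorem ev_X : ev Polynomial.X = qq := by simp [ev_apply]

theorem ev_inj : Function.Injective ev := by
  have h1 : ev = ((algebraMap (Polynomial ℚ) F).comp (Polynomial.mapRingHom (Int.castRingHom ℚ))) := by
    apply Polynomial.ringHom_ext
    · intro a; simp
    · simp [ev_X, qq]
  rw [h1]
  exact (RatFunc.algebraMap_injective ℚ).comp
    (Polynomial.map_injective _ (Int.cast_injective))

theorem qq_ne : qq ≠ 0 := RatFunc.X_ne_zero

theorem qk : 1 + (qq^2)^2 ≠ 0 := by
  have : (1 + (Polynomial.X^2)^2 : Polynomial ℤ) ≠ 0 := by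
    intro h
    have := congrArg (Polynomial.eval 1) h
    simp at this
  intro h
  apply this
  apply ev_inj
  simpa [ev_X] using h

theorem qk3 : 1 + qq^2 + (qq^2)^2 ≠ 0 := by
  have : (1 + Polynomial.X^2 + (Polynomial.X^2)^2 : Polynomial ℤ) ≠ 0 := by
    intro h
    have := congrArg (Polynomial.eval 1) h
    simp at this
  intro h
  apply this
  apply ev_inj
  simpa [ev_X] using h

theorem serreU1 : E1^3*E2 - box3 • (E1^2*E2*E1) + box3 • (E1*E2*E1^2) - E2*E1^3 = 0 := by
  have := RingQuot.mkAlgHom_rel F SerreRel.rel1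
  simpa [map_sub, map_add, map_mul, map_pow, E1, E2] using this

theorem serreU2 : E2^3*E1 - box3 • (E2^2*E1*E2) + box3 • (E2*E1*E2^2) - E1*E2^3 = 0 := by
  have := RingQuot.mkAlgHom_rel F SerreRel.rel2
  simpa [map_sub, map_add, map_mul, map_pow, E1, E2] using this

theorem box3_eq : box3 = qq^2 + 1 + (qq^2)⁻¹ := by simp [box3, inv_pow]

theorem relsU : Rels qq u0 u1 u2 u3 := by
  have s1 := serreU1
  have s2 := serreU2
  rw [box3_eq] at s1 s2
  set c : F := (1 - (qq⁻¹) ^ 2)⁻¹ with hc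
  refine mkRels qq qq_ne qk qk3 (c^2 * (qq + qq⁻¹)⁻¹) E1 E2 (c^2 • Aelt) u1 u2 u3 s1 s2 ?_ ?_ ?_ ?_
  · rw [Aelt, mul_smul, inv_pow qq]
  · rw [u1, ← hc, v1, v0, smul_mul_assoc, mul_smul_comm, smul_sub]
  · rw [u2, u1, ← hc, v2]
    simp only [smul_mul_assoc, mul_smul_comm, smul_sub, smul_smul]
    ring_nf
  · rw [u3, u2, ← hc, v3]
    simp only [smul_mul_assoc, mul_smul_comm, smul_sub, smul_smul]
    ring_nf

theorem relsS : Rels qq us0 us1 us2 us3 := by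
  have h := relsU
  exact ⟨h.hq, Subtype.ext h.r01, Subtype.ext h.r12, Subtype.ext h.r23, Subtype.ext h.r02,
    Subtype.ext h.r13, Subtype.ext h.r03⟩


structure Dat (R : Type) [Ring R] [Algebra F R] where
  u0 : R
  u1 : R
  u2 : R
  u3 : R
  rels : Rels qq u0 u1 u2 u3

section
variable {R : Type} [Ring R] [Algebra F R]

def Dat.p1 (D : Dat R) : R := D.u3 * D.u1 - qq ^ 2 • D.u2 ^ 2
def Dat.p0 (D : Dat R) : R := D.u2 * D.u0 - qq ^ 2 • D.u1 ^ 2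
def Dat.mon (D : Dat R) (a : Idx) : R := D.u3 ^ a.1 * D.u2 ^ a.2.1 * D.u1 ^ a.2.2.1 * D.u0 ^ a.2.2.2
def Dat.Ee (D : Dat R) (a : Idx) : R := qq ^ bexp a • D.mon a
def Dat.cond1 (D : Dat R) (B : Idx → R) (a : Idx) : Prop :=
  ∃ φ : Idx →₀ Polynomial ℤ,
    (↑φ.support : Set Idx) ⊆ Sset a ∧
    B a - D.Ee a =
      φ.sum fun b p => (qq * Polynomial.eval₂ (Int.castRingHom F) qq p) • D.Ee b
def Dat.SigmaHyp (D : Dat R) (bar : F →+* F) (σ : R → R) : Prop :=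
  bar qq = qq⁻¹ ∧
  Function.Bijective σ ∧
  (∀ x y : R, σ (x + y) = σ x + σ y) ∧
  (∀ x y : R, σ (x * y) = σ y * σ x) ∧
  (∀ (c : F) (x : R), σ (c • x) = bar c • σ x) ∧
  σ D.u0 = D.u0 ∧ σ D.u1 = qq ^ 2 • D.u1 ∧ σ D.u2 = qq ^ 4 • D.u2 ∧ σ D.u3 = qq ^ 6 • D.u3
def Dat.DCB (D : Dat R) (bar : F →+* F) (σ : R → R) (B : Idx → R) : Prop :=
  ∀ a : Idx, D.cond1 B a ∧ σ (B a) = qq ^ (-Nnum a) • B a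

variable {D : Dat R}

theorem mon_ps0 (b : Idx) : D.mon b * D.p0 =
    qq ^ (4*(b.1:ℤ) + 2*b.2.1 - 2*b.2.2.2) • (D.p0 * D.mon b) := by
  obtain ⟨⟨h0, h1, h2, h3⟩, -⟩ := D.rels.comm
  have h1' : D.u1 * D.p0 = (1:F) • (D.p0 * D.u1) := by rw [one_smul]; exact h1
  have := qmon (p := D.p0) h0 h1' h2 h3 b.1 b.2.1 b.2.2.1 b.2.2.2
  rw [Dat.mon, this]
  congr 1
  rw [zpow_sub₀ qq_ne, zpow_add₀ qq_ne]
  have e : ∀ (m n : ℕ), qq ^ ((m:ℤ) * n) = (qq^m)^n := fun m n => by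
    rw [← pow_mul]; exact_mod_cast zpow_natCast qq (m*n)
  have e4 := e 4 b.1
  have e2 := e 2 b.2.1
  have e0 := e 2 b.2.2.2
  push_cast at e4 e2 e0
  rw [e4, e2, e0, one_pow, mul_one, inv_pow, div_eq_mul_inv]

theorem mon_ps1 (b : Idx) : D.mon b * D.p1 =
    qq ^ (2*(b.1:ℤ) - 2*b.2.2.1 - 4*b.2.2.2) • (D.p1 * D.mon b) := by
  obtain ⟨-, ⟨h0, h1, h2, h3⟩⟩ := D.rels.comm
  have h2' : D.u2 * D.p1 = (1:F) • (D.p1 * D.u2) := by rw [one_smul]; exact h2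
  have := qmon (p := D.p1) h0 h1 h2' h3 b.1 b.2.1 b.2.2.1 b.2.2.2
  rw [Dat.mon, this]
  congr 1
  rw [zpow_sub₀ qq_ne, zpow_sub₀ qq_ne]
  have e : ∀ (m n : ℕ), qq ^ ((m:ℤ) * n) = (qq^m)^n := fun m n => by
    rw [← pow_mul]; exact_mod_cast zpow_natCast qq (m*n)
  have e4 := e 2 b.1
  have e2 := e 2 b.2.2.1
  have e0 := e 4 b.2.2.2
  push_cast at e4 e2 e0
  rw [e4, e2, e0, one_pow, mul_one, inv_pow, inv_pow, div_eq_mul_inv, div_eq_mul_inv]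

theorem Ee_ps0 (b : Idx) : qq^(b.2.1+2*b.2.2.1+3*b.2.2.2) • (D.Ee b * D.p0) =
    D.Ee (b.1, b.2.1+1, b.2.2.1, b.2.2.2+1) - qq^(1+b.2.1+b.2.2.2) • D.Ee (b.1, b.2.1, b.2.2.1+2, b.2.2.2) := by
  have h := D.rels.mon0 b.1 b.2.1 b.2.2.1 b.2.2.2
  have e : qq^(b.2.1+2*b.2.2.1+3*b.2.2.2) • (D.Ee b * D.p0) =
     qq^(bexp b + b.2.1 + b.2.2.2) • (qq^(2*b.2.2.1+2*b.2.2.2) • (D.mon b * D.p0)) := by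
    rw [Dat.Ee, smul_mul_assoc, smul_smul, smul_smul, ← pow_add, ← pow_add]; congr 2; ring
  rw [e]
  erw [h]
  rw [smul_sub, smul_smul]
  simp only [Dat.Ee, Dat.mon, smul_smul, bexp, ← pow_add, Nat.choose_succ_succ', zero_add, Nat.reduceAdd, Nat.choose_one_right, Nat.choose_zero_right]
  congr 3 <;> (try simp only [Nat.choose_one_right]) <;> ring

theorem Ee_ps1 (b : Idx) : qq^(3*b.1+2*b.2.1+b.2.2.1) • (D.p1 * D.Ee b) =
    D.Ee (b.1+1, b.2.1, b.2.2.1+1, b.2.2.2) - qq^(1+b.1+b.2.2.1) • D.Ee (b.1, b.2.1+2, b.2.2.1, b.2.2.2) := by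
  have h := D.rels.mon1 b.1 b.2.1 b.2.2.1 b.2.2.2
  have e : qq^(3*b.1+2*b.2.1+b.2.2.1) • (D.p1 * D.Ee b) =
     qq^(bexp b + b.1 + b.2.2.1) • (qq^(2*b.1+2*b.2.1) • (D.p1 * D.mon b)) := by
    rw [Dat.Ee, mul_smul_comm, smul_smul, smul_smul, ← pow_add, ← pow_add]; congr 2; ring
  rw [e]
  erw [h]
  rw [smul_sub, smul_smul]
  simp only [Dat.Ee, Dat.mon, smul_smul, bexp, ← pow_add, Nat.choose_succ_succ', zero_add, Nat.reduceAdd, Nat.choose_one_right, Nat.choose_zero_right]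
  congr 3 <;> (try simp only [Nat.choose_one_right]) <;> ring

/-! ### Lattices -/

def QLat (G : Idx → R) (T : Set Idx) : AddSubgroup R :=
  AddSubgroup.closure {z | ∃ p : Polynomial ℤ, ∃ b ∈ T, z = (qq * ev p) • G b}

theorem Lat_gen {G : Idx → R} {T : Set Idx} (p : Polynomial ℤ) {b : Idx} (hb : b ∈ T) :
    (qq * ev p) • G b ∈ QLat G T := AddSubgroup.subset_closure ⟨p, b, hb, rfl⟩

theorem Lat_mono {G : Idx → R} {T T' : Set Idx} (h : T ⊆ T') : QLat G T ≤ QLat G T' := by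
  apply AddSubgroup.closure_mono
  rintro z ⟨p, b, hb, rfl⟩
  exact ⟨p, b, h hb, rfl⟩

theorem Lat_ind {G : Idx → R} {T : Set Idx} (f : R →+ R) (H : AddSubgroup R)
    (h : ∀ p : Polynomial ℤ, ∀ b ∈ T, f ((qq * ev p) • G b) ∈ H) {z : R} (hz : z ∈ QLat G T) :
    f z ∈ H := by
  have : QLat G T ≤ H.comap f := by
    rw [QLat, AddSubgroup.closure_le]
    rintro z ⟨p, b, hb, rfl⟩
    exact h p b hb
  exact this hz

theorem Lat_smul {G : Idx → R} {T : Set Idx} (r : Polynomial ℤ) {z : R} (hz : z ∈ QLat G T) :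
    ev r • z ∈ QLat G T := by
  refine Lat_ind (DistribSMul.toAddMonoidHom R (ev r)) _ ?_ hz
  intro p b hb
  have : (DistribSMul.toAddMonoidHom R (ev r)) ((qq * ev p) • G b) = (qq * ev (r*p)) • G b := by
    show ev r • ((qq * ev p) • G b) = _
    rw [smul_smul, map_mul]; congr 1; ring
  rw [this]
  exact Lat_gen _ hb

theorem cond_Lat {B : Idx → R} {a : Idx} (h : D.cond1 B a) : B a - D.Ee a ∈ QLat D.Ee (Sset a) := by
  obtain ⟨φ, h1, h2⟩ := h
  rw [h2]
  apply AddSubgroup.sum_mem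
  intro b hb
  exact Lat_gen _ (h1 hb)

theorem tri_trans {a b c : Idx} (h : tri a b) (h' : tri b c) : tri a c := by
  obtain ⟨s, r, h1, h2, h3, h4⟩ := h
  obtain ⟨s', r', k1, k2, k3, k4⟩ := h'
  refine ⟨s+s', r+r', ?_, ?_, ?_, ?_⟩ <;> push_cast <;> linarith

theorem tri_lt {a b : Idx} (h : b ∈ Sset a) : b.1 + b.2.2.2 < a.1 + a.2.2.2 := by
  obtain ⟨⟨s, r, h1, h2, h3, h4⟩, hne⟩ := h
  by_contra hh
  apply hne
  have hs : s = 0 := by omega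
  have hr : r = 0 := by omega
  subst hs hr
  obtain ⟨a1, a2, a3, a4⟩ := a
  obtain ⟨b1, b2, b3, b4⟩ := b
  simp only [Prod.mk.injEq]
  simp only at h1 h2 h3 h4
  omega

theorem Sset_trans {a b : Idx} (h : b ∈ Sset a) : Sset b ⊆ Sset a := by
  intro c hc
  refine ⟨tri_trans h.1 hc.1, ?_⟩
  rintro rfl
  have := tri_lt h
  have := tri_lt hc
  omega

theorem tri_N {a b : Idx} (h : tri a b) : Nnum b = Nnum a := by
  obtain ⟨s, r, h1, h2, h3, h4⟩ := h
  simp only [Nnum, h1, h2, h3, h4]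
  ring

theorem Lat_EB {B : Idx → R} (hB : ∀ a, D.cond1 B a) : ∀ n : ℕ, ∀ b : Idx, b.1 + b.2.2.2 = n →
    ∀ z ∈ QLat D.Ee (Sset b), z ∈ QLat B (Sset b) := by
  intro n
  induction n using Nat.strong_induction_on with
  | _ n ih =>
    intro b hb z hz
    refine Lat_ind (AddMonoidHom.id _) _ ?_ hz
    intro p c hc
    show (qq * ev p) • D.Ee c ∈ _
    have h1 : B c - D.Ee c ∈ QLat B (Sset b) :=
      Lat_mono (Sset_trans hc) (ih _ (hb ▸ tri_lt hc) c rfl _ (cond_Lat (hB c)))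
    have : (qq * ev p) • D.Ee c = (qq * ev p) • B c - ev (Polynomial.X * p) • (B c - D.Ee c) := by
      rw [map_mul, ev_X, ← smul_sub]; congr 1; abel
    rw [this]
    exact sub_mem (Lat_gen _ hc) (Lat_smul _ h1)

theorem B_linInd {B : Idx → R} (hPBW : LinearIndependent F D.mon) (hB : ∀ a, D.cond1 B a) :
    LinearIndependent F B := by
  have key : ∀ a : Idx, B a - D.Ee a ∈ Submodule.span F (D.mon '' {d | d.1 + d.2.2.2 < a.1 + a.2.2.2}) := by
    intro a
    have := Lat_ind (AddMonoidHom.id _)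
      (Submodule.span F (D.mon '' {d | d.1 + d.2.2.2 < a.1 + a.2.2.2})).toAddSubgroup ?_ (cond_Lat (hB a))
    · exact this
    · intro p b hb
      show (qq * ev p) • D.Ee b ∈ Submodule.span F _
      rw [Dat.Ee, smul_smul]
      exact Submodule.smul_mem _ _ (Submodule.subset_span ⟨b, tri_lt hb, rfl⟩)
  refine linearIndependent_iff.2 ?_
  intro φ hφ
  by_contra hne
  obtain ⟨b, hb, hmax⟩ := φ.support.exists_max_image (fun d => d.1 + d.2.2.2)
    (Finsupp.support_nonempty_iff.2 hne)
  apply hPBW.notMem_span_image (s := {d | d ≠ b}) (x := b) (by simp)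
  set V := Submodule.span F (D.mon '' {d | d ≠ b}) with hV
  have hle : ∀ c ∈ φ.support, B c - D.Ee c ∈ V := by
    intro c hc
    refine Submodule.span_mono (Set.image_mono ?_) (key c)
    rintro d hd rfl
    have := hmax c hc
    simp only [Set.mem_setOf_eq] at hd
    omega
  rw [Finsupp.linearCombination_apply, Finsupp.sum, ← Finset.add_sum_erase _ _ hb] at hφ
  have h1 : ∑ c ∈ φ.support.erase b, φ c • B c ∈ V := by
    apply Submodule.sum_mem
    intro c hc
    rw [Finset.mem_erase] at hc
    apply Submodule.smul_mem
    have e : B c = (B c - D.Ee c) + D.Ee c := by abel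
    rw [e]
    refine V.add_mem (hle c hc.2) ?_
    exact V.smul_mem _ (Submodule.subset_span ⟨c, hc.1, rfl⟩)
  have h2 : φ b • B b ∈ V := by
    rw [eq_neg_of_add_eq_zero_left hφ]; exact V.neg_mem h1
  have h3 : B b ∈ V := (V.smul_mem_iff (Finsupp.mem_support_iff.1 hb)).1 h2
  have h4 : D.Ee b ∈ V := by
    have e : D.Ee b = B b - (B b - D.Ee b) := by abel
    rw [e]; exact V.sub_mem h3 (hle b hb)
  exact (V.smul_mem_iff (pow_ne_zero _ qq_ne)).1 h4

theorem bar_ev {bar : F →+* F} (hb : bar qq = qq⁻¹) (p : Polynomial ℤ) :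
    bar (ev p) = Polynomial.eval₂ (Int.castRingHom F) qq⁻¹ p := by
  rw [ev_apply, Polynomial.hom_eval₂, hb]
  congr 1
  exact RingHom.ext_int _ _

theorem bar_fix {bar : F →+* F} (hb : bar qq = qq⁻¹) (p : Polynomial ℤ)
    (h : bar (qq * ev p) = qq * ev p) : p = 0 := by
  by_contra hp
  rw [map_mul, hb, bar_ev hb] at h
  let _ : Invertible (qq⁻¹) := invertibleOfNonzero (inv_ne_zero qq_ne)
  have h2 := Polynomial.eval₂_reverse_mul_pow (Int.castRingHom F) qq⁻¹ p
  rw [← h2, invOf_eq_inv, inv_inv] at h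
  have h3 : ev p.reverse = ev (Polynomial.X ^ (p.natDegree + 2) * p) := by
    rw [map_mul, map_pow, ev_X, ev_apply]
    have hq := qq_ne
    rw [ev_apply] at *
    rw [inv_pow] at h
    field_simp at h
    rw [h]; ring
  have h4 := ev_inj h3
  have h5 := Polynomial.reverse_natDegree_le p
  rw [h4, Polynomial.natDegree_mul (pow_ne_zero _ Polynomial.X_ne_zero) hp, Polynomial.natDegree_X_pow] at h5
  omega

theorem uniq {bar : F →+* F} {σ : R → R} {B : Idx → R}
    (hPBW : LinearIndependent F D.mon) (hσ : D.SigmaHyp bar σ) (hB : D.DCB bar σ B) (n : ℤ) (z : R)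
    (hz : z ∈ QLat B {c | Nnum c = n}) (hs : σ z = qq ^ (-n) • z) : z = 0 := by
  obtain ⟨hbar, -, hadd, -, hsm, -⟩ := hσ
  have hli := B_linInd hPBW (fun a => (hB a).1)
  have hP : ∃ φ φ' : Idx →₀ F, z = Finsupp.linearCombination F B φ ∧
      σ z = qq ^ (-n) • Finsupp.linearCombination F B φ' ∧
      ∀ b, ∃ p : Polynomial ℤ, φ b = qq * ev p ∧ φ' b = bar (qq * ev p) := by
    clear hs
    rw [QLat] at hz
    induction hz using AddSubgroup.closure_induction with
    | mem x hx =>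
      obtain ⟨p, b, hb, rfl⟩ := hx
      refine ⟨Finsupp.single b (qq * ev p), Finsupp.single b (bar (qq * ev p)), ?_, ?_, ?_⟩
      · rw [Finsupp.linearCombination_single]
      · rw [Finsupp.linearCombination_single, hsm, (hB b).2, hb, smul_comm]
      · intro c
        by_cases h : b = c
        · subst h
          exact ⟨p, by simp, by simp⟩
        · exact ⟨0, by simp [Finsupp.single_eq_of_ne' h], by simp [Finsupp.single_eq_of_ne' h]⟩
    | zero =>
      refine ⟨0, 0, by simp, ?_, fun b => ⟨0, by simp, by simp⟩⟩
      have := hsm 0 0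
      simpa using this
    | add x y _ _ hx hy =>
      obtain ⟨φ, φ', h1, h2, h3⟩ := hx
      obtain ⟨ψ, ψ', k1, k2, k3⟩ := hy
      refine ⟨φ + ψ, φ' + ψ', by rw [map_add, h1, k1], by rw [hadd, h2, k2, map_add, smul_add], ?_⟩
      intro b
      obtain ⟨p, e1, e2⟩ := h3 b
      obtain ⟨r, f1, f2⟩ := k3 b
      exact ⟨p + r, by rw [Finsupp.add_apply, e1, f1, map_add, mul_add],
        by rw [Finsupp.add_apply, e2, f2, map_add, mul_add, map_add]⟩
    | neg x _ hx =>
      obtain ⟨φ, φ', h1, h2, h3⟩ := hx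
      refine ⟨-φ, -φ', by rw [map_neg, h1], ?_, ?_⟩
      · have := hsm (-1) x
        rw [map_neg, map_one, neg_one_smul, neg_one_smul] at this
        rw [this, h2, map_neg, smul_neg]
      · intro b
        obtain ⟨p, e1, e2⟩ := h3 b
        exact ⟨-p, by rw [Finsupp.neg_apply, e1, map_neg, mul_neg],
          by rw [Finsupp.neg_apply, e2, map_neg, mul_neg, map_neg]⟩
  obtain ⟨φ, φ', h1, h2, h3⟩ := hP
  rw [h2] at hs
  have h4 := smul_right_injective R (zpow_ne_zero (-n) qq_ne) hs
  rw [h1] at h4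
  have h5 : φ' = φ := hli h4
  have h6 : φ = 0 := by
    ext b
    obtain ⟨p, e1, e2⟩ := h3 b
    rw [h5, e1] at e2
    rw [e1, bar_fix hbar p e2.symm]; simp
  rw [h1, h6, map_zero]

theorem final {bar : F →+* F} {σ : R → R} {B : Idx → R}
    (hPBW : LinearIndependent F D.mon) (hσ : D.SigmaHyp bar σ) (hB : D.DCB bar σ B) (a : Idx) (z : R)
    (hz : z - D.Ee a ∈ QLat D.Ee (Sset a)) (hs : σ z = qq ^ (-Nnum a) • z) : B a = z := by
  have h1 : B a - z ∈ QLat D.Ee (Sset a) := by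
    have := sub_mem (cond_Lat (hB a).1) hz
    rwa [sub_sub_sub_cancel_right] at this
  have h2 := Lat_EB (fun a => (hB a).1) _ a rfl _ h1
  have h3 : B a - z ∈ QLat B {c | Nnum c = Nnum a} := Lat_mono (fun c hc => tri_N hc.1) h2
  have h4 := uniq hPBW hσ hB (Nnum a) _ h3 ?_
  · exact sub_eq_zero.1 h4
  · obtain ⟨hbar, -, hadd, -, hsm, -⟩ := hσ
    have := hsm (-1) z
    rw [map_neg, map_one, neg_one_smul, neg_one_smul] at this
    rw [sub_eq_add_neg, hadd, this, (hB a).2, hs, smul_add, smul_neg]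

theorem B_comm {B : Idx → R} (hB : ∀ a, D.cond1 B a) (p : R) (e : Idx → ℤ)
    (he : ∀ a b, tri a b → e b = e a) (hm : ∀ b, D.mon b * p = qq ^ e b • (p * D.mon b)) (a : Idx) :
    B a * p = qq ^ e a • (p * B a) := by
  have hE : ∀ b, tri a b → D.Ee b * p = qq ^ e a • (p * D.Ee b) := by
    intro b hb
    rw [Dat.Ee, smul_mul_assoc, hm, he a b hb, mul_smul_comm, smul_comm]
  have h0 : tri a a := ⟨0, 0, by simp, by simp, by simp, by simp⟩
  let f : R →+ R := AddMonoidHom.mulRight p -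
    (DistribSMul.toAddMonoidHom R (qq ^ e a)).comp (AddMonoidHom.mulLeft p)
  have hf : ∀ z, f z = z * p - qq ^ e a • (p * z) := fun z => rfl
  have h1 := Lat_ind f ⊥ ?_ (cond_Lat (hB a))
  · rw [AddSubgroup.mem_bot, map_sub, sub_eq_zero, hf, hf, hE a h0, sub_self, sub_eq_zero] at h1
    exact h1
  · intro r b hb
    rw [AddSubgroup.mem_bot, hf, smul_mul_assoc, hE b hb.1, mul_smul_comm, smul_comm, sub_self]

theorem main_aux {B : Idx → R} {a a' : Idx} (hB : D.cond1 B a) (f : R →+ R)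
    (hsm : ∀ (c : F) x, f (c • x) = c • f x)
    (g h : Idx → Idx) (k : Idx → ℕ)
    (hf : ∀ b, tri a b → f (D.Ee b) = D.Ee (g b) - qq^(1+k b) • D.Ee (h b))
    (hg : g a = a') (hg' : ∀ b ∈ Sset a, g b ∈ Sset a') (hh : ∀ b, tri a b → h b ∈ Sset a') :
    f (B a) - D.Ee a' ∈ QLat D.Ee (Sset a') := by
  have h0 : tri a a := ⟨0, 0, by simp, by simp, by simp, by simp⟩
  have h1 : f (B a - D.Ee a) ∈ QLat D.Ee (Sset a') := by
    refine Lat_ind f _ ?_ (cond_Lat hB)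
    intro p b hb
    rw [hsm, hf b hb.1, smul_sub, smul_smul]
    refine sub_mem (Lat_gen _ (hg' b hb)) ?_
    have : qq * ev p * qq^(1+k b) = qq * ev (p * Polynomial.X^(1+k b)) := by
      rw [map_mul, map_pow, ev_X, mul_assoc]
    rw [this]
    exact Lat_gen _ (hh b hb.1)
  rw [map_sub, hf a h0, hg] at h1
  have h2 : (qq * ev (Polynomial.X ^ k a)) • D.Ee (h a) ∈ QLat D.Ee (Sset a') := Lat_gen _ (hh a h0)
  rw [map_pow, ev_X, ← pow_succ', add_comm (k a) 1] at h2
  have := sub_mem h1 h2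
  convert this using 1
  abel

theorem sig0 {bar : F →+* F} {σ : R → R} (hσ : D.SigmaHyp bar σ) : σ D.p0 = qq^2 • D.p0 := by
  obtain ⟨hbar, -, hadd, hmul, hsm, s0, s1, s2, s3⟩ := hσ
  have hq := qq_ne
  have e : D.p0 = D.u2*D.u0 + (-qq^2) • (D.u1*D.u1) := by
    rw [Dat.p0, sq D.u1, neg_smul, sub_eq_add_neg]
  have r := D.rels.r02
  rw [e, hadd, hsm, hmul, hmul, s0, s1, s2, map_neg, map_pow, hbar, mul_smul_comm, r, mul_smul_comm, smul_mul_assoc]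
  exact sigcalc0 _ hq _ _

theorem sig1 {bar : F →+* F} {σ : R → R} (hσ : D.SigmaHyp bar σ) : σ D.p1 = qq^6 • D.p1 := by
  obtain ⟨hbar, -, hadd, hmul, hsm, s0, s1, s2, s3⟩ := hσ
  have hq := qq_ne
  have e : D.p1 = D.u3*D.u1 + (-qq^2) • (D.u2*D.u2) := by
    rw [Dat.p1, sq D.u2, neg_smul, sub_eq_add_neg]
  have r := D.rels.r13
  rw [e, hadd, hsm, hmul, hmul, s1, s2, s3, map_neg, map_pow, hbar, mul_smul_comm, smul_mul_assoc, r, mul_smul_comm, smul_mul_assoc]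
  exact sigcalc1 _ hq _ _

theorem bar_pow {bar : F →+* F} (hbar : bar qq = qq⁻¹) (n : ℕ) : bar (qq^n) = qq^(-(n:ℤ)) := by
  rw [map_pow, hbar, inv_pow, zpow_neg, zpow_natCast]

theorem gen9 (bar : F →+* F) (σ : R → R) (B : Idx → R)
    (hPBW : LinearIndependent F D.mon) (hσ : D.SigmaHyp bar σ) (hB : D.DCB bar σ B) (a : Idx) :
    B (a.1, a.2.1 + 1, a.2.2.1, a.2.2.2 + 1)
        = qq ^ (a.2.1 + 2 * a.2.2.1 + 3 * a.2.2.2) • (B a * D.p0) ∧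
    B (a.1, a.2.1 + 1, a.2.2.1, a.2.2.2 + 1)
        = qq ^ (4 * a.1 + 3 * a.2.1 + 2 * a.2.2.1 + a.2.2.2) • (D.p0 * B a) ∧
    B (a.1 + 1, a.2.1, a.2.2.1 + 1, a.2.2.2)
        = qq ^ (3 * a.1 + 2 * a.2.1 + a.2.2.1) • (D.p1 * B a) ∧
    B (a.1 + 1, a.2.1, a.2.2.1 + 1, a.2.2.2)
        = qq ^ (a.1 + 2 * a.2.1 + 3 * a.2.2.1 + 4 * a.2.2.2) • (B a * D.p1) := by
  have hB1 : ∀ a, D.cond1 B a := fun a => (hB a).1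
  have c0 := B_comm hB1 D.p0 _ (by
    rintro a b ⟨s, r, h1, h2, h3, h4⟩
    show (4*(b.1:ℤ) + 2*b.2.1 - 2*b.2.2.2) = (4*(a.1:ℤ) + 2*a.2.1 - 2*a.2.2.2)
    rw [h1, h2, h4]; ring) mon_ps0 a
  have c1 := B_comm hB1 D.p1 _ (by
    rintro a b ⟨s, r, h1, h2, h3, h4⟩
    show (2*(b.1:ℤ) - 2*b.2.2.1 - 4*b.2.2.2) = (2*(a.1:ℤ) - 2*a.2.2.1 - 4*a.2.2.2)
    rw [h1, h3, h4]; ring) mon_ps1 a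
  have c1' : D.p1 * B a = qq ^ (-(2*(a.1:ℤ) - 2*a.2.2.1 - 4*a.2.2.2)) • (B a * D.p1) := by
    rw [c1, smul_smul, ← zpow_add₀ qq_ne, neg_add_cancel, zpow_zero, one_smul]
  have A0 : B (a.1, a.2.1 + 1, a.2.2.1, a.2.2.2 + 1)
        = qq ^ (a.2.1 + 2 * a.2.2.1 + 3 * a.2.2.2) • (B a * D.p0) := by
    apply final hPBW hσ hB
    · refine main_aux (hB1 a) ((DistribSMul.toAddMonoidHom R
        (qq ^ (a.2.1 + 2 * a.2.2.1 + 3 * a.2.2.2))).comp (AddMonoidHom.mulRight D.p0)) ?_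
        (fun b => (b.1, b.2.1 + 1, b.2.2.1, b.2.2.2 + 1)) (fun b => (b.1, b.2.1, b.2.2.1+2, b.2.2.2))
        (fun b => b.2.1 + b.2.2.2) ?_ rfl ?_ ?_
      · intro c x
        show qq ^ (a.2.1 + 2 * a.2.2.1 + 3 * a.2.2.2) • ((c • x) * D.p0) = c • (qq ^ (a.2.1 + 2 * a.2.2.1 + 3 * a.2.2.2) • (x * D.p0))
        rw [smul_mul_assoc, smul_comm]
      · intro b hb
        show qq ^ (a.2.1 + 2 * a.2.2.1 + 3 * a.2.2.2) • (D.Ee b * D.p0) = _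
        have : a.2.1 + 2 * a.2.2.1 + 3 * a.2.2.2 = b.2.1 + 2 * b.2.2.1 + 3 * b.2.2.2 := by
          obtain ⟨s, r, h1, h2, h3, h4⟩ := hb
          omega
        rw [this, Ee_ps0, ← add_assoc]
      · rintro b ⟨⟨s, r, h1, h2, h3, h4⟩, hne⟩
        refine ⟨⟨s, r, ?_, ?_, ?_, ?_⟩, ?_⟩
        · simpa using h1
        · push_cast; linarith
        · simpa using h3
        · push_cast; linarith
        · intro h
          apply hne
          simp only [Prod.mk.injEq, add_left_inj] at h
          ext <;> simp [h]
      · rintro b ⟨s, r, h1, h2, h3, h4⟩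
        refine ⟨⟨s, r+1, ?_, ?_, ?_, ?_⟩, ?_⟩
        · simpa using h1
        · push_cast; linarith
        · push_cast; linarith
        · push_cast; linarith
        · intro h
          simp only [Prod.mk.injEq] at h
          omega
    · have s0 := sig0 hσ
      obtain ⟨hbar, -, hadd, hmul, hsm, -⟩ := hσ
      rw [hsm, hmul, s0, (hB a).2, bar_pow hbar, c0]
      simp only [smul_mul_assoc, mul_smul_comm, smul_smul, ← zpow_natCast, ← zpow_add₀ qq_ne]
      congr 2
      simp only [Nnum]
      push_cast
      ring
  have A1 : B (a.1 + 1, a.2.1, a.2.2.1 + 1, a.2.2.2)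
        = qq ^ (3 * a.1 + 2 * a.2.1 + a.2.2.1) • (D.p1 * B a) := by
    apply final hPBW hσ hB
    · refine main_aux (hB1 a) ((DistribSMul.toAddMonoidHom R
        (qq ^ (3 * a.1 + 2 * a.2.1 + a.2.2.1))).comp (AddMonoidHom.mulLeft D.p1)) ?_
        (fun b => (b.1 + 1, b.2.1, b.2.2.1 + 1, b.2.2.2)) (fun b => (b.1, b.2.1+2, b.2.2.1, b.2.2.2))
        (fun b => b.1 + b.2.2.1) ?_ rfl ?_ ?_
      · intro c x
        show qq ^ (3 * a.1 + 2 * a.2.1 + a.2.2.1) • (D.p1 * (c • x)) = c • (qq ^ (3 * a.1 + 2 * a.2.1 + a.2.2.1) • (D.p1 * x))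
        rw [mul_smul_comm, smul_comm]
      · intro b hb
        show qq ^ (3 * a.1 + 2 * a.2.1 + a.2.2.1) • (D.p1 * D.Ee b) = _
        have : 3 * a.1 + 2 * a.2.1 + a.2.2.1 = 3 * b.1 + 2 * b.2.1 + b.2.2.1 := by
          obtain ⟨s, r, h1, h2, h3, h4⟩ := hb
          omega
        rw [this, Ee_ps1, ← add_assoc]
      · rintro b ⟨⟨s, r, h1, h2, h3, h4⟩, hne⟩
        refine ⟨⟨s, r, ?_, ?_, ?_, ?_⟩, ?_⟩
        · push_cast; linarith
        · simpa using h2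
        · push_cast; linarith
        · simpa using h4
        · intro h
          apply hne
          simp only [Prod.mk.injEq, add_left_inj] at h
          ext <;> simp [h]
      · rintro b ⟨s, r, h1, h2, h3, h4⟩
        refine ⟨⟨s+1, r, ?_, ?_, ?_, ?_⟩, ?_⟩
        · push_cast; linarith
        · push_cast; linarith
        · push_cast; linarith
        · simpa using h4
        · intro h
          simp only [Prod.mk.injEq] at h
          omega
    · have s1 := sig1 hσ
      obtain ⟨hbar, -, hadd, hmul, hsm, -⟩ := hσ
      rw [hsm, hmul, s1, (hB a).2, bar_pow hbar]
      simp only [smul_mul_assoc, mul_smul_comm, smul_smul, ← zpow_natCast]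
      rw [c1]
      simp only [smul_smul, ← zpow_add₀ qq_ne]
      congr 2
      simp only [Nnum]
      push_cast
      ring
  refine ⟨A0, ?_, A1, ?_⟩
  · rw [A0, c0, smul_smul, ← zpow_natCast, ← zpow_natCast, ← zpow_add₀ qq_ne]
    congr 2
    push_cast
    ring
  · rw [A1, c1', smul_smul, ← zpow_natCast, ← zpow_natCast, ← zpow_add₀ qq_ne]
    congr 2
    push_cast
    ring
end

def datS : Dat Sgen := ⟨us0, us1, us2, us3, relsS⟩

/-- For every `a = (a₃,a₂,a₁,a₀) ∈ ℕ⁴` the dual canonical basis elements satisfy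
`B[a₃, a₂+1, a₁, a₀+1] = q^{a₂+2a₁+3a₀} B[a] p₀ = q^{4a₃+3a₂+2a₁+a₀} p₀ B[a]` and
`B[a₃+1, a₂, a₁+1, a₀] = q^{3a₃+2a₂+a₁} p₁ B[a] = q^{a₃+2a₂+3a₁+4a₀} B[a] p₁`. -/
theorem stmt9 (bar : F →+* F) (σ : Sgen → Sgen) (B : Idx → Sgen)
    (hPBW : LinearIndependent F mon) (hσ : SigmaHyp bar σ) (hB : DCB bar σ B) (a : Idx) :
    B (a.1, a.2.1 + 1, a.2.2.1, a.2.2.2 + 1)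
        = qq ^ (a.2.1 + 2 * a.2.2.1 + 3 * a.2.2.2) • (B a * ps0) ∧
    B (a.1, a.2.1 + 1, a.2.2.1, a.2.2.2 + 1)
        = qq ^ (4 * a.1 + 3 * a.2.1 + 2 * a.2.2.1 + a.2.2.2) • (ps0 * B a) ∧
    B (a.1 + 1, a.2.1, a.2.2.1 + 1, a.2.2.2)
        = qq ^ (3 * a.1 + 2 * a.2.1 + a.2.2.1) • (ps1 * B a) ∧
    B (a.1 + 1, a.2.1, a.2.2.1 + 1, a.2.2.2)
        = qq ^ (a.1 + 2 * a.2.1 + 3 * a.2.2.1 + 4 * a.2.2.2) • (B a * ps1) := by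
  exact gen9 (D := datS) bar σ B hPBW hσ hB a
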